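/- Null free boundary: Let Ω ⊂ ℝⁿ be open and let f : [0,∞) → ℝ be continuous, non-decreasing, and satisfy both condition (1.2) with constants M > 0, γ ∈ [0,3) and condition (5.1) with constants N > 0 and the same γ. If u ∈ C(Ω) is a bounded non-negative viscosity solution of Δ∞u = f(u) in Ω, then the free boundary ∂{u > 0} ∩ Ω has n-dimensional Lebesgue measure zero. -/

import Mathlib

open Set Metric Filter MeasureTheory

/-- The infinity Laplacian of a (C²) function `φ` at `x`:
`Δ∞φ(x) = Σ_{i,j} ∂_iφ(x) ∂_jφ(x) ∂_{ij}φ(x)`. -/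
noncomputable def infLap {n : ℕ} (φ : EuclideanSpace ℝ (Fin n) → ℝ)
    (x : EuclideanSpace ℝ (Fin n)) : ℝ :=
  ∑ i : Fin n, ∑ j : Fin n,
    fderiv ℝ φ x (EuclideanSpace.single i 1) * fderiv ℝ φ x (EuclideanSpace.single j 1) *
      fderiv ℝ (fun y => fderiv ℝ φ y (EuclideanSpace.single i 1)) x (EuclideanSpace.single j 1)

/-- `u` is a viscosity supersolution of `Δ∞u = F(x, u(x))` in `Ω`. -/
def IsViscSupersol {n : ℕ} (Ω : Set (EuclideanSpace ℝ (Fin n)))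
    (u : EuclideanSpace ℝ (Fin n) → ℝ)
    (F : EuclideanSpace ℝ (Fin n) → ℝ → ℝ) : Prop :=
  ∀ φ : EuclideanSpace ℝ (Fin n) → ℝ, ContDiff ℝ 2 φ →
    ∀ x₀ ∈ Ω, φ x₀ = u x₀ → IsLocalMin (fun x => u x - φ x) x₀ →
      infLap φ x₀ ≤ F x₀ (φ x₀)

/-- `u` is a viscosity subsolution of `Δ∞u = F(x, u(x))` in `Ω`. -/
def IsViscSubsol {n : ℕ} (Ω : Set (EuclideanSpace ℝ (Fin n)))
    (u : EuclideanSpace ℝ (Fin n) → ℝ)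
    (F : EuclideanSpace ℝ (Fin n) → ℝ → ℝ) : Prop :=
  ∀ φ : EuclideanSpace ℝ (Fin n) → ℝ, ContDiff ℝ 2 φ →
    ∀ x₀ ∈ Ω, φ x₀ = u x₀ → IsLocalMax (fun x => u x - φ x) x₀ →
      F x₀ (φ x₀) ≤ infLap φ x₀

/-- `u` is a viscosity solution of `Δ∞u = F(x, u(x))` in `Ω`. -/
def IsViscSol {n : ℕ} (Ω : Set (EuclideanSpace ℝ (Fin n)))
    (u : EuclideanSpace ℝ (Fin n) → ℝ)
    (F : EuclideanSpace ℝ (Fin n) → ℝ → ℝ) : Prop :=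
  IsViscSupersol Ω u F ∧ IsViscSubsol Ω u F

/-- Condition (1.2): for every `T > 0` there is `δ₀ > 0` such that
`0 ≤ f(δt) ≤ M δ^γ f(t)` for all `0 < t ≤ T` and `0 < δ ≤ δ₀`. -/
def Cond12 (f : ℝ → ℝ) (M γ : ℝ) : Prop :=
  ∀ T > 0, ∃ δ₀ > 0, ∀ t : ℝ, 0 < t → t ≤ T → ∀ δ : ℝ, 0 < δ → δ ≤ δ₀ →
    0 ≤ f (δ * t) ∧ f (δ * t) ≤ M * δ ^ γ * f t

/-- Condition (5.1): for every `T > 0` there is `δ₀ > 0` such that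
`f(δt) ≥ N δ^γ f(t) ≥ 0` for all `0 < t ≤ T` and `0 < δ ≤ δ₀`. -/
def Cond51 (f : ℝ → ℝ) (N γ : ℝ) : Prop :=
  ∀ T > 0, ∃ δ₀ > 0, ∀ t : ℝ, 0 < t → t ≤ T → ∀ δ : ℝ, 0 < δ → δ ≤ δ₀ →
    N * δ ^ γ * f t ≤ f (δ * t) ∧ 0 ≤ N * δ ^ γ * f t

/-!
Around a point `y` where `u > 0`, compare the subsolution `u` with the radial barrier
`H (|x - y| / r) ^ (k + 2)`, where `H` is the maximum of `u` over the closed ball of radius `r`.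
It dominates `u` on the sphere but vanishes at `y`, so it cannot be a strict supersolution; since
`f(t)` is at least a multiple of `t ^ γ` near `0`, this forces `H ^ (3 - γ)` to be at least a
multiple of `r ^ 4`. Around a point `z` where this maximum is attained, compare the supersolution
`u` with the convex radial barrier `H (1 - s) (1 - s / 2)`, `s = |x - z| / R`. Since `f(t)` is at
most a multiple of `t ^ γ`, this keeps `u` positive on a ball of radius `R` comparable to `r`.
Hence the free boundary misses a ball of comparable radius inside every small ball centred on it:
it is porous, and a porous set has no Lebesgue density points.

If `f` vanishes near `0`, the second comparison alone shows that there is no free boundary.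
-/

open Topology

section Porosity

variable {α : Type*} [PseudoMetricSpace α] {S : Set α} {x : α}

/-- (Lower) porosity of `S` at `x`: at every small scale `r`, the closed ball of radius `r` about
`x` contains a hole of `S` of radius comparable to `r`. The comparison constant may depend on the
point. -/
def IsPorousAt (S : Set α) (x : α) : Prop :=
  ∃ κ > 0, ∀ᶠ r in 𝓝[>] (0 : ℝ), ∃ z, ball z (κ * r) ⊆ closedBall x r \ S

variable [MeasurableSpace α] {μ : Measure α}

lemma exists_eventually_measure_closedBall_le_mul_measure_ball (μ : Measure α)
    [IsUnifLocDoublingMeasure μ] {κ : ℝ} (hκ : 0 < κ) :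
    ∃ C : NNReal, 1 ≤ C ∧ ∀ᶠ r in 𝓝[>] (0 : ℝ), ∀ x, ∀ z ∈ closedBall x r,
      μ (closedBall x r) ≤ C * μ (ball z (κ * r)) := by
  have hκ4 : 0 < κ / 4 := by positivity
  refine ⟨_, IsUnifLocDoublingMeasure.one_le_scalingConstantOf μ (κ / 4)⁻¹, ?_⟩
  filter_upwards [self_mem_nhdsWithin, eventually_nhdsGT_zero_mul_left two_pos
    (IsUnifLocDoublingMeasure.eventually_measure_le_scaling_constant_mul' μ (κ / 4) hκ4)]
    with r (hr : 0 < r) hscale x z hz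
  have hball : closedBall x r ⊆ closedBall z (2 * r) :=
    closedBall_subset_closedBall' (by rw [mem_closedBall, dist_comm] at hz; linarith)
  have hhole : closedBall z (κ / 4 * (2 * r)) ⊆ ball z (κ * r) :=
    closedBall_subset_ball (by nlinarith)
  grw [hball, hscale z, hhole]

lemma measure_inter_closedBall_div_le_one_sub [OpensMeasurableSpace α] {C : NNReal} (hC : 1 ≤ C)
    {z : α} {r s : ℝ} (hfin : μ (closedBall x r) ≠ ⊤)
    (hhole : ball z s ⊆ closedBall x r \ S) (hle : μ (closedBall x r) ≤ C * μ (ball z s)) :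
    μ (S ∩ closedBall x r) / μ (closedBall x r) ≤ 1 - (C : ENNReal)⁻¹ := by
  have hinv : (C : ENNReal)⁻¹ * μ (closedBall x r) ≤ μ (ball z s) := by
    have hC0 : (C : ENNReal) ≠ 0 := by simpa using (one_pos.trans_le hC).ne'
    rwa [← ENNReal.div_eq_inv_mul, ENNReal.div_le_iff_le_mul (.inl hC0) (.inl ENNReal.coe_ne_top),
      mul_comm]
  have hsub : S ∩ closedBall x r ⊆ closedBall x r \ ball z s :=
    fun w hw => ⟨hw.2, fun hwz => (hhole hwz).2 hw.1⟩
  have hball : ball z s ⊆ closedBall x r := hhole.trans sdiff_subset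
  refine ENNReal.div_le_of_le_mul ?_
  calc μ (S ∩ closedBall x r)
      ≤ μ (closedBall x r \ ball z s) := measure_mono hsub
    _ = μ (closedBall x r) - μ (ball z s) :=
      measure_sdiff hball measurableSet_ball.nullMeasurableSet (measure_ne_top_of_subset hball hfin)
    _ ≤ μ (closedBall x r) - (C : ENNReal)⁻¹ * μ (closedBall x r) := by gcongr
    _ = (1 - (C : ENNReal)⁻¹) * μ (closedBall x r) := by
      rw [ENNReal.sub_mul fun _ _ => hfin, one_mul]

theorem measure_eq_zero_of_forall_isPorousAt [SecondCountableTopology α] [BorelSpace α]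
    [IsLocallyFiniteMeasure μ] [IsUnifLocDoublingMeasure μ] (hS : ∀ x ∈ S, IsPorousAt S x) :
    μ S = 0 := by
  suffices ∀ᵐ x ∂μ.restrict S, x ∉ S by
    have hnull : μ.restrict S S = 0 := by simpa [ae_iff] using this
    rwa [Measure.restrict_apply_self] at hnull
  filter_upwards [IsUnifLocDoublingMeasure.ae_tendsto_measure_inter_div μ S 1] with x hdensity hxS
  obtain ⟨κ, hκ, hholes⟩ := hS x hxS
  obtain ⟨C, hC, hdoubling⟩ := exists_eventually_measure_closedBall_le_mul_measure_ball μ hκ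
  have hfinite : ∀ᶠ r in 𝓝[>] (0 : ℝ), μ (closedBall x r) ≠ ⊤ := by
    obtain ⟨W, hW, hWfin⟩ := μ.finiteAt_nhds x
    filter_upwards [nhdsWithin_le_nhds (eventually_closedBall_subset hW)] with r hr
    exact measure_ne_top_of_subset hr hWfin.ne
  have hle : ∀ᶠ r in 𝓝[>] (0 : ℝ),
      μ (S ∩ closedBall x r) / μ (closedBall x r) ≤ 1 - (C : ENNReal)⁻¹ := by
    filter_upwards [self_mem_nhdsWithin, hholes, hdoubling, hfinite]
      with r (hr : 0 < r) ⟨z, hz⟩ hdoubling hfin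
    have hzr : z ∈ closedBall x r := (hz (mem_ball_self (by positivity))).1
    exact measure_inter_closedBall_div_le_one_sub hC hfin hz (hdoubling x z hzr)
  have hcenter : ∀ᶠ r in 𝓝[>] (0 : ℝ), x ∈ closedBall x (1 * r) := by
    filter_upwards [self_mem_nhdsWithin] with r (hr : 0 < r)
    exact mem_closedBall_self (by linarith)
  have hone : (1 : ENNReal) ≤ 1 - (C : ENNReal)⁻¹ :=
    le_of_tendsto (hdensity (fun _ => x) id tendsto_id hcenter) hle
  exact hone.not_gt (ENNReal.sub_lt_self ENNReal.one_ne_top one_ne_zero (by simp))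

end Porosity

section InfLap

variable {n : ℕ} {φ ψ : EuclideanSpace ℝ (Fin n) → ℝ} {x : EuclideanSpace ℝ (Fin n)}

lemma infLap_congr (h : φ =ᶠ[𝓝 x] ψ) : infLap φ x = infLap ψ x := by
  have hfderiv : fderiv ℝ φ =ᶠ[𝓝 x] fderiv ℝ ψ := h.fderiv
  have happly (v : EuclideanSpace ℝ (Fin n)) :
      (fun z => fderiv ℝ φ z v) =ᶠ[𝓝 x] fun z => fderiv ℝ ψ z v :=
    hfderiv.fun_comp fun L => L v
  simp only [infLap, hfderiv.eq_of_nhds, (happly _).fderiv_eq]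

lemma infLap_add_const (c : ℝ) : infLap (fun z => φ z + c) x = infLap φ x := by
  simp only [infLap, fderiv_add_const]

lemma infLap_eq_zero_of_isLocalMin (h : IsLocalMin φ x) : infLap φ x = 0 := by
  simp [infLap, h.fderiv_eq_zero]

lemma infLap_eq_inner_gradient (h : DifferentiableAt ℝ (gradient φ) x) :
    infLap φ x = inner ℝ (gradient φ x) (fderiv ℝ (gradient φ) x (gradient φ x)) := by
  have hcoord (z : EuclideanSpace ℝ (Fin n)) (i : Fin n) :
      fderiv ℝ φ z (EuclideanSpace.single i 1) = gradient φ z i := by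
    rw [← inner_gradient_left, EuclideanSpace.inner_single_right]; simp
  have hpartial (i : Fin n) (v : EuclideanSpace ℝ (Fin n)) :
      fderiv ℝ (fun z => gradient φ z i) x v = fderiv ℝ (gradient φ) x v i := by
    have := (EuclideanSpace.proj (𝕜 := ℝ) i).hasFDerivAt.comp x h.hasFDerivAt
    exact congr($(this.fderiv) v)
  have hexpand : fderiv ℝ (gradient φ) x (gradient φ x) =
      ∑ j, gradient φ x j • fderiv ℝ (gradient φ) x (EuclideanSpace.single j 1) := by
    conv_lhs => rw [← (EuclideanSpace.basisFun (Fin n) ℝ).sum_repr (gradient φ x)]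
    simp
  simp only [infLap, hcoord, hpartial]
  rw [hexpand, inner_sum, Finset.sum_comm]
  refine Finset.sum_congr rfl fun j _ => ?_
  rw [inner_smul_right, PiLp.inner_apply, Finset.mul_sum]
  refine Finset.sum_congr rfl fun i _ => ?_
  simp only [RCLike.inner_apply, conj_trivial]
  ring

lemma infLap_eq_half_fderiv_norm_sq_gradient (h : DifferentiableAt ℝ (gradient φ) x) :
    infLap φ x = fderiv ℝ (fun z => ‖gradient φ z‖ ^ 2) x (gradient φ x) / 2 := by
  rw [infLap_eq_inner_gradient h, h.hasFDerivAt.norm_sq.fderiv]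
  simp

end InfLap

section Radial

variable {V : Type*} [NormedAddCommGroup V] [InnerProductSpace ℝ V] {x y : V}

lemma hasFDerivAt_norm_sub (hxy : x ≠ y) :
    HasFDerivAt (fun z => ‖z - y‖) (‖x - y‖⁻¹ • innerSL ℝ (x - y)) x := by
  have hsq : HasFDerivAt (fun z => ‖z - y‖ ^ 2) (2 • innerSL ℝ (x - y)) x := by
    simpa using ((hasFDerivAt_id (𝕜 := ℝ) x).sub_const y).norm_sq
  have hpos : 0 < ‖x - y‖ := norm_sub_pos_iff.2 hxy
  convert hsq.sqrt (by positivity) using 1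
  · simp
  · rw [Real.sqrt_sq hpos.le, ← Nat.cast_smul_eq_nsmul ℝ, smul_smul]
    congr 1
    simp

lemma hasGradientAt_comp_norm_sub [CompleteSpace V] {p : ℝ → ℝ} {p' : ℝ} (hxy : x ≠ y)
    (hp : HasDerivAt p p' ‖x - y‖) :
    HasGradientAt (fun z => p ‖z - y‖) ((p' / ‖x - y‖) • (x - y)) x := by
  rw [hasGradientAt_iff_hasFDerivAt]
  refine (hp.comp_hasFDerivAt x (hasFDerivAt_norm_sub hxy)).congr_fderiv ?_
  ext v
  simp [div_eq_mul_inv, mul_assoc]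

lemma contDiff_norm_sub_pow_of_even {k : ℕ} (hk : Even k) {m : WithTop ℕ∞} (y : V) :
    ContDiff ℝ m fun z => ‖z - y‖ ^ k := by
  obtain ⟨l, rfl⟩ := hk.two_dvd
  simp only [pow_mul]
  exact ((contDiff_id.sub contDiff_const).norm_sq ℝ).pow l

end Radial

section RadialInfLap

variable {n : ℕ} {x y : EuclideanSpace ℝ (Fin n)}

theorem infLap_comp_norm_sub {p p' : ℝ → ℝ} {p'' : ℝ} (hxy : x ≠ y)
    (hp : ∀ᶠ s in 𝓝 ‖x - y‖, HasDerivAt p (p' s) s) (hp' : HasDerivAt p' p'' ‖x - y‖) :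
    infLap (fun z => p ‖z - y‖) x = p' ‖x - y‖ ^ 2 * p'' := by
  have hnorm : HasFDerivAt (fun z => ‖z - y‖) (‖x - y‖⁻¹ • innerSL ℝ (x - y)) x :=
    hasFDerivAt_norm_sub hxy
  have hpos : 0 < ‖x - y‖ := norm_sub_pos_iff.2 hxy
  have hgrad : gradient (fun z => p ‖z - y‖) =ᶠ[𝓝 x]
      fun z => (p' ‖z - y‖ / ‖z - y‖) • (z - y) := by
    filter_upwards [hnorm.continuousAt.eventually hp, isOpen_ne.mem_nhds hxy] with z hz hzy
    exact (hasGradientAt_comp_norm_sub hzy hz).gradient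
  have hp'norm : HasFDerivAt (fun z => p' ‖z - y‖) (p'' • ‖x - y‖⁻¹ • innerSL ℝ (x - y)) x :=
    hp'.comp_hasFDerivAt x hnorm
  have hdiff : DifferentiableAt ℝ (gradient fun z => p ‖z - y‖) x := by
    refine DifferentiableAt.congr_of_eventuallyEq ?_ hgrad
    simp only [div_eq_mul_inv]
    exact (hp'norm.differentiableAt.fun_mul (hnorm.differentiableAt.fun_inv hpos.ne')).fun_smul
      (differentiableAt_id.sub_const y)
  have hnormSq : (fun z => ‖gradient (fun z => p ‖z - y‖) z‖ ^ 2) =ᶠ[𝓝 x]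
      fun z => p' ‖z - y‖ ^ 2 := by
    filter_upwards [hgrad, isOpen_ne.mem_nhds hxy] with z hz hzy
    have : ‖z - y‖ ≠ 0 := (norm_sub_pos_iff.2 hzy).ne'
    rw [hz, norm_smul, norm_div, norm_norm, div_mul_cancel₀ _ this, Real.norm_eq_abs, sq_abs]
  rw [infLap_eq_half_fderiv_norm_sq_gradient hdiff, hnormSq.fderiv_eq, (hp'norm.pow 2).fderiv,
    hgrad.eq_of_nhds]
  simp only [smul_apply, innerSL_apply_apply, inner_smul_right, real_inner_self_eq_norm_sq,
    smul_eq_mul]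
  rw [nsmul_eq_mul]
  push_cast
  field_simp

lemma infLap_quadratic_norm_sub {h R : ℝ} (hR : R ≠ 0) (hxy : x ≠ y) :
    infLap (fun z => h * (1 - ‖z - y‖ / R) * (1 - ‖z - y‖ / R / 2)) x =
      h ^ 3 / (4 * R ^ 4) * (3 - 2 * (‖x - y‖ / R)) ^ 2 := by
  have hp (s : ℝ) : HasDerivAt (fun s => h * (1 - s / R) * (1 - s / R / 2))
      (h / R ^ 2 * s - 3 * h / (2 * R)) s := by
    have hdiv : HasDerivAt (fun s => s / R) (1 / R) s := (hasDerivAt_id s).div_const R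
    refine (((hdiv.const_sub 1).const_mul h).mul ((hdiv.div_const 2).const_sub 1)).congr_deriv ?_
    field_simp
    ring
  have hp' (s : ℝ) : HasDerivAt (fun s => h / R ^ 2 * s - 3 * h / (2 * R)) (h / R ^ 2) s := by
    simpa using ((hasDerivAt_id s).const_mul (h / R ^ 2)).sub_const (3 * h / (2 * R))
  rw [infLap_comp_norm_sub hxy (.of_forall hp) (hp' _)]
  field_simp
  ring

lemma infLap_mul_norm_sub_div_pow {H r : ℝ} (hH : 0 ≤ H) (hr : 0 < r) (k : ℕ) :
    infLap (fun z => H * (‖z - y‖ / r) ^ (k + 2)) x =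
      H ^ 3 / r ^ 4 * ((k + 2) ^ 3 * (k + 1)) * (‖x - y‖ / r) ^ (3 * k + 2) := by
  rcases eq_or_ne x y with rfl | hxy
  · have hmin : IsLocalMin (fun z => H * (‖z - x‖ / r) ^ (k + 2)) x :=
      .of_forall fun z => by simpa using by positivity
    simp [infLap_eq_zero_of_isLocalMin hmin]
  have hpow (m : ℕ) (s : ℝ) :
      HasDerivAt (fun s => (s / r) ^ (m + 1)) ((m + 1) * (s / r) ^ m / r) s := by
    refine (((hasDerivAt_id s).div_const r).fun_pow (m + 1)).congr_deriv ?_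
    simp [div_eq_mul_inv, mul_assoc]
  have hp (s : ℝ) : HasDerivAt (fun s => H * (s / r) ^ (k + 2))
      (H * (k + 2) / r * (s / r) ^ (k + 1)) s := by
    refine ((hpow (k + 1) s).const_mul H).congr_deriv ?_
    push_cast
    ring
  have hp' (s : ℝ) := (hpow k s).const_mul (H * (k + 2) / r)
  rw [infLap_comp_norm_sub hxy (.of_forall hp) (hp' _)]
  field_simp
  ring

end RadialInfLap

section Comparison

variable {n : ℕ} {Ω K : Set (EuclideanSpace ℝ (Fin n))} {u φ : EuclideanSpace ℝ (Fin n) → ℝ}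
  {F : EuclideanSpace ℝ (Fin n) → ℝ → ℝ} {x₀ : EuclideanSpace ℝ (Fin n)}

lemma exists_contDiff_eventuallyEq {V : Type*} [NormedAddCommGroup V] [NormedSpace ℝ V]
    [FiniteDimensional ℝ V] {φ : V → ℝ} {x : V} {m : ℕ} (hφ : ContDiffAt ℝ m φ x) :
    ∃ ψ : V → ℝ, ContDiff ℝ m ψ ∧ ψ =ᶠ[𝓝 x] φ := by
  obtain ⟨ε, hε, hball⟩ := Metric.eventually_nhds_iff_ball.1 (hφ.eventually (by simp))
  let χ : ContDiffBump x := ⟨ε / 4, ε / 2, by positivity, by linarith⟩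
  refine ⟨fun z => χ z * φ z, contDiff_iff_contDiffAt.2 fun z => ?_, ?_⟩
  · by_cases hz : z ∈ ball x ε
    · exact χ.contDiffAt.mul (hball z hz)
    · have hzero : (fun z => χ z * φ z) =ᶠ[𝓝 z] 0 := by
        have hmem : z ∉ tsupport χ := by
          rw [χ.tsupport_eq]
          exact fun h => hz (closedBall_subset_ball (by simp [χ, hε]) h)
        filter_upwards [notMem_tsupport_iff_eventuallyEq.1 hmem] with w hw
        simp [hw]
      exact contDiffAt_const.congr_of_eventuallyEq hzero
  · filter_upwards [χ.eventuallyEq_one] with z hz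
    simp [hz]

theorem IsViscSupersol.infLap_le (hu : IsViscSupersol Ω u F) (hx₀ : x₀ ∈ Ω)
    (hφ : ContDiffAt ℝ 2 φ x₀) (hmin : IsLocalMin (fun x => u x - φ x) x₀) :
    infLap φ x₀ ≤ F x₀ (u x₀) := by
  obtain ⟨ψ, hψ, hψφ⟩ := exists_contDiff_eventuallyEq (m := 2) hφ
  have htouch : ψ x₀ + (u x₀ - φ x₀) = u x₀ := by rw [hψφ.eq_of_nhds]; ring
  have htest := hu (fun z => ψ z + (u x₀ - φ x₀)) (hψ.add contDiff_const) x₀ hx₀ htouch <| by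
    filter_upwards [hmin, hψφ] with x hx hψx
    rw [hψx, hψφ.eq_of_nhds]
    linarith
  rwa [infLap_add_const, infLap_congr hψφ, htouch] at htest

theorem IsViscSubsol.le_infLap (hu : IsViscSubsol Ω u F) (hx₀ : x₀ ∈ Ω)
    (hφ : ContDiffAt ℝ 2 φ x₀) (hmax : IsLocalMax (fun x => u x - φ x) x₀) :
    F x₀ (u x₀) ≤ infLap φ x₀ := by
  obtain ⟨ψ, hψ, hψφ⟩ := exists_contDiff_eventuallyEq (m := 2) hφ
  have htouch : ψ x₀ + (u x₀ - φ x₀) = u x₀ := by rw [hψφ.eq_of_nhds]; ring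
  have htest := hu (fun z => ψ z + (u x₀ - φ x₀)) (hψ.add contDiff_const) x₀ hx₀ htouch <| by
    filter_upwards [hmax, hψφ] with x hx hψx
    rw [hψx, hψφ.eq_of_nhds]
    linarith
  rwa [infLap_add_const, infLap_congr hψφ, htouch] at htest

theorem IsViscSupersol.le_of_strict_subsol (hu : IsViscSupersol Ω u F) (hK : IsCompact K)
    (hKΩ : K ⊆ Ω) (huK : ContinuousOn u K) (hφK : ContinuousOn φ K)
    (hφ : ∀ x ∈ K, u x < φ x →
      x ∈ interior K ∧ ContDiffAt ℝ 2 φ x ∧ F x (u x) < infLap φ x) :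
    ∀ x ∈ K, φ x ≤ u x := by
  intro x hx
  obtain ⟨x₀, hx₀, hmin⟩ := hK.exists_isMinOn ⟨x, hx⟩ (huK.sub hφK)
  by_contra! hlt
  have hneg : u x₀ < φ x₀ := by
    have : u x₀ - φ x₀ ≤ u x - φ x := hmin hx
    linarith
  obtain ⟨hint, hsmooth, hstrict⟩ := hφ x₀ hx₀ hneg
  have hlocal : IsLocalMin (fun x => u x - φ x) x₀ :=
    hmin.isLocalMin (mem_interior_iff_mem_nhds.1 hint)
  exact hstrict.not_ge (hu.infLap_le (hKΩ hx₀) hsmooth hlocal)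

theorem IsViscSubsol.le_of_strict_supersol (hu : IsViscSubsol Ω u F) (hK : IsCompact K)
    (hKΩ : K ⊆ Ω) (huK : ContinuousOn u K) (hφK : ContinuousOn φ K)
    (hφ : ∀ x ∈ K, φ x < u x →
      x ∈ interior K ∧ ContDiffAt ℝ 2 φ x ∧ infLap φ x < F x (u x)) :
    ∀ x ∈ K, u x ≤ φ x := by
  intro x hx
  obtain ⟨x₀, hx₀, hmax⟩ := hK.exists_isMaxOn ⟨x, hx⟩ (huK.sub hφK)
  by_contra! hlt
  have hpos : φ x₀ < u x₀ := by
    have : u x - φ x ≤ u x₀ - φ x₀ := hmax hx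
    linarith
  obtain ⟨hint, hsmooth, hstrict⟩ := hφ x₀ hx₀ hpos
  have hlocal : IsLocalMax (fun x => u x - φ x) x₀ :=
    hmax.isLocalMax (mem_interior_iff_mem_nhds.1 hint)
  exact hstrict.not_ge (hu.le_infLap (hKΩ hx₀) hsmooth hlocal)

end Comparison

section Barriers

variable {n : ℕ} {Ω : Set (EuclideanSpace ℝ (Fin n))} {u : EuclideanSpace ℝ (Fin n) → ℝ}
  {F : EuclideanSpace ℝ (Fin n) → ℝ → ℝ} {y z : EuclideanSpace ℝ (Fin n)} {A γ r R : ℝ}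

lemma mul_one_sub_mul_one_sub_half_mem_Ioc {h s : ℝ} (hh : 0 < h) (hs : s ∈ Ico 0 1) :
    h * (1 - s) * (1 - s / 2) ∈ Ioc 0 h := by
  obtain ⟨hs0, hs1⟩ := hs
  have hleft : 0 < 1 - s := by linarith
  have hright : 0 < 1 - s / 2 := by linarith
  refine ⟨mul_pos (mul_pos hh hleft) hright, ?_⟩
  rw [mul_assoc]
  exact mul_le_of_le_one_right hh.le (by nlinarith)

theorem IsViscSupersol.pos_of_mem_ball (hu : IsViscSupersol Ω u F) (hball : closedBall y R ⊆ Ω)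
    (huc : ContinuousOn u (closedBall y R)) (hu0 : ∀ x ∈ closedBall y R, 0 ≤ u x) (hy : 0 < u y)
    (hF : ∀ x ∈ ball y R, ∀ t ∈ Ico 0 (u y), F x t < u y ^ 3 / (4 * R ^ 4)) :
    ∀ x ∈ ball y R, 0 < u x := by
  intro x hx
  have hR : 0 < R := dist_nonneg.trans_lt hx
  set w : EuclideanSpace ℝ (Fin n) → ℝ :=
    fun z => u y * (1 - ‖z - y‖ / R) * (1 - ‖z - y‖ / R / 2) with hw
  have hratio {z : EuclideanSpace ℝ (Fin n)} (hz : z ∈ ball y R) : ‖z - y‖ / R ∈ Ico 0 1 :=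
    ⟨by positivity, (div_lt_one hR).2 (mem_ball_iff_norm.1 hz)⟩
  suffices hcomp : ∀ z ∈ closedBall y R, w z ≤ u z from
    (mul_one_sub_mul_one_sub_half_mem_Ioc hy (hratio hx)).1.trans_le
      (hcomp x (ball_subset_closedBall hx))
  refine hu.le_of_strict_subsol (isCompact_closedBall y R) hball huc
    (by fun_prop) fun z hz hlt => ?_
  have hzy : z ≠ y := by
    rintro rfl
    simp [hw] at hlt
  have hzball : z ∈ ball y R := by
    refine mem_ball.2 (lt_of_le_of_ne hz fun hzR => hlt.not_ge ?_)
    rw [dist_eq_norm] at hzR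
    simpa [hw, hzR, hR.ne'] using hu0 z hz
  have hwy : w z ≤ u y := (mul_one_sub_mul_one_sub_half_mem_Ioc hy (hratio hzball)).2
  refine ⟨ball_subset_interior_closedBall hzball, ?_, ?_⟩
  · have hnorm : ContDiffAt ℝ 2 (fun z => ‖z - y‖) z :=
      (contDiffAt_id.sub contDiffAt_const).norm ℝ (sub_ne_zero.2 hzy)
    fun_prop
  · calc F z (u z) < u y ^ 3 / (4 * R ^ 4) := hF z hzball _ ⟨hu0 z hz, hlt.trans_le hwy⟩
      _ ≤ u y ^ 3 / (4 * R ^ 4) * (3 - 2 * (‖z - y‖ / R)) ^ 2 :=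
        le_mul_of_one_le_right (by positivity) (by nlinarith [(hratio hzball).2])
      _ = infLap w z := (infLap_quadratic_norm_sub hR.ne' hzy).symm

lemma rpow_three_sub_mul_rpow {s : ℝ} (hs : 0 < s) : s ^ (3 - γ) * s ^ γ = s ^ 3 := by
  rw [← Real.rpow_add hs, sub_add_cancel]
  norm_cast

theorem IsViscSupersol.pos_of_mem_ball_of_le_rpow (hu : IsViscSupersol Ω u F)
    (hball : closedBall y R ⊆ Ω) (huc : ContinuousOn u (closedBall y R))
    (hu0 : ∀ x ∈ closedBall y R, 0 ≤ u x) (hy : 0 < u y) (hA : 0 ≤ A) (hγ : 0 ≤ γ)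
    (hF : ∀ x ∈ ball y R, ∀ t ∈ Ico 0 (u y), F x t ≤ A * t ^ γ)
    (hAR : 4 * A * R ^ 4 < u y ^ (3 - γ)) : ∀ x ∈ ball y R, 0 < u x := by
  intro x hx
  have hR : 0 < R := dist_nonneg.trans_lt hx
  refine hu.pos_of_mem_ball hball huc hu0 hy (fun z hz t ht => ?_) x hx
  calc F z t ≤ A * t ^ γ := hF z hz t ht
    _ ≤ A * u y ^ γ := by gcongr; exacts [ht.1, ht.2.le]
    _ < u y ^ 3 / (4 * R ^ 4) := by
      rw [lt_div_iff₀ (by positivity), ← rpow_three_sub_mul_rpow (γ := γ) hy]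
      nlinarith [Real.rpow_pos_of_pos hy γ]

-- The condition says `k + 2 ≥ 4 / (3 - γ)`, the scaling exponent of `Δ∞u = u ^ γ`; the barrier with
-- exactly that exponent need not be `C²` at its centre, one with an even exponent is.
lemma exists_even_add_two_mul_le (hγ : γ < 3) :
    ∃ k : ℕ, Even k ∧ (k + 2) * γ ≤ 3 * k + 2 := by
  obtain ⟨m, hm⟩ := exists_nat_ge ((2 * γ - 2) / (3 - γ))
  rw [div_le_iff₀ (by linarith)] at hm
  refine ⟨2 * m, even_two_mul m, ?_⟩
  push_cast
  nlinarith [(Nat.cast_nonneg m : (0 : ℝ) ≤ m)]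

lemma cube_mul_pow_le_rpow_mul_rpow {H τ : ℝ} {k : ℕ} (hH : 0 < H) (hτ0 : 0 ≤ τ) (hτ1 : τ ≤ 1)
    (hγ : 0 ≤ γ) (hk : (k + 2) * γ ≤ 3 * k + 2) :
    H ^ 3 * τ ^ (3 * k + 2) ≤ H ^ (3 - γ) * (H * τ ^ (k + 2)) ^ γ := by
  have hτ : τ ^ (3 * k + 2) ≤ (τ ^ (k + 2)) ^ γ := by
    rw [← Real.rpow_natCast, ← Real.rpow_natCast, ← Real.rpow_mul hτ0]
    exact Real.rpow_le_rpow_of_exponent_ge' hτ0 hτ1 (by positivity) (by push_cast; exact hk)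
  rw [Real.mul_rpow hH.le (by positivity), ← mul_assoc, rpow_three_sub_mul_rpow hH]
  gcongr

lemma infLap_mul_norm_sub_div_pow_le {x : EuclideanSpace ℝ (Fin n)} {H : ℝ} {k : ℕ} (hH : 0 < H)
    (hr : 0 < r) (hx : x ∈ closedBall y r) (hγ : 0 ≤ γ) (hk : (k + 2) * γ ≤ 3 * k + 2) :
    infLap (fun z => H * (‖z - y‖ / r) ^ (k + 2)) x ≤
      (k + 2) ^ 3 * (k + 1) * H ^ (3 - γ) / r ^ 4 * (H * (‖x - y‖ / r) ^ (k + 2)) ^ γ := by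
  have hτ1 : ‖x - y‖ / r ≤ 1 := (div_le_one hr).2 (mem_closedBall_iff_norm.1 hx)
  calc infLap (fun z => H * (‖z - y‖ / r) ^ (k + 2)) x
      = (k + 2) ^ 3 * (k + 1) / r ^ 4 * (H ^ 3 * (‖x - y‖ / r) ^ (3 * k + 2)) := by
        rw [infLap_mul_norm_sub_div_pow hH.le hr]; ring
    _ ≤ (k + 2) ^ 3 * (k + 1) / r ^ 4 *
          (H ^ (3 - γ) * (H * (‖x - y‖ / r) ^ (k + 2)) ^ γ) :=
        mul_le_mul_of_nonneg_left
          (cube_mul_pow_le_rpow_mul_rpow hH (by positivity) hτ1 hγ hk) (by positivity)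
    _ = _ := by ring

theorem IsViscSubsol.mul_pow_four_le_of_isMaxOn (hu : IsViscSubsol Ω u F) (hr : 0 < r)
    (hball : closedBall y r ⊆ Ω) (huc : ContinuousOn u (closedBall y r)) (hy : 0 < u y)
    (hmax : IsMaxOn u (closedBall y r) z) (hγ : 0 ≤ γ)
    (hF : ∀ x ∈ ball y r, ∀ t ∈ Ioc 0 (u z), A * t ^ γ ≤ F x t)
    {k : ℕ} (hkeven : Even k) (hk : (k + 2) * γ ≤ 3 * k + 2) :
    A * r ^ 4 ≤ (k + 2) ^ 3 * (k + 1) * u z ^ (3 - γ) := by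
  by_contra! hlt
  have hz : 0 < u z := hy.trans_le (hmax (mem_closedBall_self hr.le))
  set w : EuclideanSpace ℝ (Fin n) → ℝ := fun x => u z * (‖x - y‖ / r) ^ (k + 2) with hw
  suffices hcomp : ∀ x ∈ closedBall y r, u x ≤ w x by
    have hwy : w y = 0 := by simp [hw]
    exact hy.not_ge (hwy ▸ hcomp y (mem_closedBall_self hr.le))
  have hwsmooth : ContDiff ℝ 2 w := by
    simp only [hw, div_pow]
    exact contDiff_const.mul
      ((contDiff_norm_sub_pow_of_even (hkeven.add even_two) y).div_const _)
  refine hu.le_of_strict_supersol (isCompact_closedBall y r) hball huc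
    hwsmooth.continuous.continuousOn fun x hx hwu => ?_
  have huz : u x ≤ u z := hmax hx
  have hxball : x ∈ ball y r := by
    refine mem_ball.2 (lt_of_le_of_ne hx fun hxr => hwu.not_ge ?_)
    rw [dist_eq_norm] at hxr
    simpa only [hw, hxr, div_self hr.ne', one_pow, mul_one] using huz
  have hw0 : 0 ≤ w x := by positivity
  have hux : 0 < u x := hw0.trans_lt hwu
  refine ⟨ball_subset_interior_closedBall hxball, hwsmooth.contDiffAt, ?_⟩
  calc infLap w x
      ≤ (k + 2) ^ 3 * (k + 1) * u z ^ (3 - γ) / r ^ 4 * w x ^ γ :=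
        infLap_mul_norm_sub_div_pow_le hz hr hx hγ hk
    _ ≤ (k + 2) ^ 3 * (k + 1) * u z ^ (3 - γ) / r ^ 4 * u x ^ γ := by gcongr
    _ < A * u x ^ γ := by gcongr; rwa [div_lt_iff₀ (by positivity)]
    _ ≤ F x (u x) := hF x hxball _ ⟨hux, huz⟩

end Barriers

section FreeBoundary

variable {n : ℕ} {Ω : Set (EuclideanSpace ℝ (Fin n))} {u : EuclideanSpace ℝ (Fin n) → ℝ}
  {F : EuclideanSpace ℝ (Fin n) → ℝ → ℝ} {x : EuclideanSpace ℝ (Fin n)} {A A' γ s₀ : ℝ}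

/-- The set where `u` is positive in its domain `Ω`; the values of `u` off `Ω` are ignored. -/
def positivitySet (Ω : Set (EuclideanSpace ℝ (Fin n))) (u : EuclideanSpace ℝ (Fin n) → ℝ) :
    Set (EuclideanSpace ℝ (Fin n)) :=
  {x | x ∈ Ω ∧ 0 < u x}

/-- The part of the boundary of the positivity set of `u` that lies in `Ω`. -/
def freeBoundary (Ω : Set (EuclideanSpace ℝ (Fin n))) (u : EuclideanSpace ℝ (Fin n) → ℝ) :
    Set (EuclideanSpace ℝ (Fin n)) :=
  frontier (positivitySet Ω u) ∩ Ω

lemma disjoint_positivitySet_freeBoundary (hΩ : IsOpen Ω) (huc : ContinuousOn u Ω) :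
    Disjoint (positivitySet Ω u) (freeBoundary Ω u) := by
  have hopen : IsOpen (positivitySet Ω u) := huc.isOpen_inter_preimage hΩ isOpen_Ioi
  exact (disjoint_iff_inter_eq_empty.2 hopen.inter_frontier_eq).mono_right inter_subset_left

lemma eventually_closedBall_subset_of_mem_freeBoundary (hΩ : IsOpen Ω) (huc : ContinuousOn u Ω)
    (hx : x ∈ freeBoundary Ω u) (hs₀ : 0 < s₀) :
    ∀ᶠ r in 𝓝[>] (0 : ℝ), closedBall x r ⊆ {z ∈ Ω | u z < s₀} := by
  have hux : u x ≤ 0 := not_lt.1 fun hpos =>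
    (disjoint_positivitySet_freeBoundary hΩ huc).notMem_of_mem_left ⟨hx.2, hpos⟩ hx
  have hΩx : Ω ∈ 𝓝 x := hΩ.mem_nhds hx.2
  exact nhdsWithin_le_nhds <| eventually_closedBall_subset <| inter_mem hΩx <|
    (huc.continuousAt hΩx).eventually_lt_const (hux.trans_lt hs₀)

lemma exists_mem_positivitySet_of_mem_freeBoundary (hx : x ∈ freeBoundary Ω u) {ε : ℝ}
    (hε : 0 < ε) : ∃ y ∈ positivitySet Ω u, dist x y < ε :=
  Metric.mem_closure_iff.1 (frontier_subset_closure hx.1) ε hε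

theorem IsViscSupersol.freeBoundary_eq_empty (hu : IsViscSupersol Ω u F) (hΩ : IsOpen Ω)
    (huc : ContinuousOn u Ω) (hu0 : ∀ x ∈ Ω, 0 ≤ u x) (hs₀ : 0 < s₀)
    (hF : ∀ x ∈ Ω, ∀ t ∈ Icc 0 s₀, F x t ≤ 0) : freeBoundary Ω u = ∅ := by
  refine eq_empty_of_forall_notMem fun x hx => ?_
  obtain ⟨r, hsmall, hr : 0 < r⟩ := ((eventually_closedBall_subset_of_mem_freeBoundary hΩ huc hx
    hs₀).and self_mem_nhdsWithin).exists
  obtain ⟨y, ⟨-, hy⟩, hxy⟩ := exists_mem_positivitySet_of_mem_freeBoundary hx (half_pos hr)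
  have hball : closedBall y (r / 2) ⊆ closedBall x r :=
    closedBall_subset_closedBall' (by rw [dist_comm]; linarith)
  have hballΩ : closedBall y (r / 2) ⊆ Ω := fun z hz => (hsmall (hball hz)).1
  have hys : u y < s₀ := (hsmall (hball (mem_closedBall_self (by positivity)))).2
  have hux : 0 < u x := hu.pos_of_mem_ball hballΩ (huc.mono hballΩ)
    (fun z hz => hu0 z (hballΩ hz)) hy (fun z hz t ht =>
      (hF z (hballΩ (ball_subset_closedBall hz)) t ⟨ht.1, ht.2.le.trans hys.le⟩).trans_lt
        (by positivity)) x hxy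
  exact (disjoint_positivitySet_freeBoundary hΩ huc).notMem_of_mem_left ⟨hx.2, hux⟩ hx

lemma exists_pos_le_one_mul_pow_four_lt (a : ℝ) (hA : 0 < A) :
    ∃ κ : ℝ, 0 < κ ∧ κ ≤ 1 ∧ a * κ ^ 4 < A := by
  have hlim : Tendsto (fun κ : ℝ => a * κ ^ 4) (𝓝[>] 0) (𝓝 0) :=
    (Continuous.tendsto' (by fun_prop) _ _ (by simp)).mono_left nhdsWithin_le_nhds
  obtain ⟨κ, hκA, hκ⟩ := ((hlim.eventually_lt_const hA).and
    (Ioc_mem_nhdsGT (zero_lt_one' ℝ))).exists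
  exact ⟨κ, hκ.1, hκ.2, hκA⟩

theorem IsViscSol.exists_forall_ball_pos (hu : IsViscSol Ω u F)
    (huc : ContinuousOn u Ω) (hu0 : ∀ x ∈ Ω, 0 ≤ u x) (hγ0 : 0 ≤ γ) (hγ3 : γ < 3)
    (hA : 0 < A) (hA' : 0 ≤ A')
    (hlower : ∀ x ∈ Ω, ∀ t ∈ Ioc 0 s₀, A * t ^ γ ≤ F x t)
    (hupper : ∀ x ∈ Ω, ∀ t ∈ Icc 0 s₀, F x t ≤ A' * t ^ γ) :
    ∃ κ, 0 < κ ∧ κ ≤ 1 ∧ ∀ y ρ, 0 < ρ → closedBall y (2 * ρ) ⊆ {z ∈ Ω | u z < s₀} → 0 < u y →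
      ∃ z ∈ closedBall y ρ, ∀ w ∈ ball z (κ * ρ), 0 < u w := by
  obtain ⟨k, hkeven, hk⟩ := exists_even_add_two_mul_le hγ3
  set Q : ℝ := (k + 2) ^ 3 * (k + 1)
  have hQ : 0 < Q := by positivity
  obtain ⟨κ, hκ0, hκ1, hκA⟩ := exists_pos_le_one_mul_pow_four_lt (4 * A' * Q) hA
  refine ⟨κ, hκ0, hκ1, fun y ρ hρ hsmall hy => ?_⟩
  have hρy : closedBall y ρ ⊆ closedBall y (2 * ρ) := closedBall_subset_closedBall (by linarith)
  have hyΩ : closedBall y ρ ⊆ Ω := fun z hz => (hsmall (hρy hz)).1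
  obtain ⟨z, hz, hzmax⟩ := (isCompact_closedBall y ρ).exists_isMaxOn
    ⟨y, mem_closedBall_self hρ.le⟩ (huc.mono hyΩ)
  have hzs : u z ≤ s₀ := (hsmall (hρy hz)).2.le
  have hz0 : 0 < u z := hy.trans_le (hzmax (mem_closedBall_self hρ.le))
  have hgrowth : A * ρ ^ 4 ≤ Q * u z ^ (3 - γ) :=
    hu.2.mul_pow_four_le_of_isMaxOn hρ hyΩ (huc.mono hyΩ) hy hzmax hγ0
      (fun w hw t ht => hlower w (hyΩ (ball_subset_closedBall hw)) t ⟨ht.1, ht.2.trans hzs⟩)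
      hkeven hk
  have hzΩ : closedBall z (κ * ρ) ⊆ Ω := fun w hw => by
    have hzy : closedBall z (κ * ρ) ⊆ closedBall y (2 * ρ) :=
      closedBall_subset_closedBall' (by nlinarith [mem_closedBall.1 hz])
    exact (hsmall (hzy hw)).1
  have hAκ : 4 * A' * (κ * ρ) ^ 4 < u z ^ (3 - γ) := by
    refine lt_of_mul_lt_mul_left ?_ hQ.le
    calc Q * (4 * A' * (κ * ρ) ^ 4) = 4 * A' * Q * κ ^ 4 * ρ ^ 4 := by ring
      _ < A * ρ ^ 4 := by gcongr
      _ ≤ Q * u z ^ (3 - γ) := hgrowth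
  exact ⟨z, hz, hu.1.pos_of_mem_ball_of_le_rpow hzΩ (huc.mono hzΩ) (fun w hw => hu0 w (hzΩ hw))
    hz0 hA' hγ0 (fun w hw t ht => hupper w (hzΩ (ball_subset_closedBall hw)) t
      ⟨ht.1, ht.2.le.trans hzs⟩) hAκ⟩

theorem IsViscSol.isPorousAt_freeBoundary (hu : IsViscSol Ω u F) (hΩ : IsOpen Ω)
    (huc : ContinuousOn u Ω) (hu0 : ∀ x ∈ Ω, 0 ≤ u x) (hγ0 : 0 ≤ γ) (hγ3 : γ < 3)
    (hA : 0 < A) (hA' : 0 ≤ A') (hs₀ : 0 < s₀)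
    (hlower : ∀ x ∈ Ω, ∀ t ∈ Ioc 0 s₀, A * t ^ γ ≤ F x t)
    (hupper : ∀ x ∈ Ω, ∀ t ∈ Icc 0 s₀, F x t ≤ A' * t ^ γ) (hx : x ∈ freeBoundary Ω u) :
    IsPorousAt (freeBoundary Ω u) x := by
  obtain ⟨κ, hκ0, hκ1, hκ⟩ := hu.exists_forall_ball_pos huc hu0 hγ0 hγ3 hA hA' hlower hupper
  refine ⟨κ / 3, by positivity, ?_⟩
  filter_upwards [eventually_closedBall_subset_of_mem_freeBoundary hΩ huc hx hs₀,
    self_mem_nhdsWithin] with r hsmall (hr : 0 < r)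
  obtain ⟨y, ⟨-, hy⟩, hxy⟩ :=
    exists_mem_positivitySet_of_mem_freeBoundary hx (ε := r / 3) (by positivity)
  rw [dist_comm] at hxy
  have hyball : closedBall y (2 * (r / 3)) ⊆ closedBall x r :=
    closedBall_subset_closedBall' (by linarith)
  obtain ⟨z, hz, hpos⟩ := hκ y (r / 3) (by positivity) (hyball.trans hsmall) hy
  have hzball : ball z (κ * (r / 3)) ⊆ closedBall x r := by
    have hzx : dist z x ≤ dist z y + dist y x := dist_triangle z y x
    exact ball_subset_closedBall.trans
      (closedBall_subset_closedBall' (by nlinarith [mem_closedBall.1 hz]))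
  refine ⟨z, ?_⟩
  rw [div_mul_comm, mul_comm]
  exact fun w hw => ⟨hzball hw, (disjoint_positivitySet_freeBoundary hΩ huc).notMem_of_mem_left
    ⟨(hsmall (hzball hw)).1, hpos w hw⟩⟩

end FreeBoundary

section PowerGrowth

variable {f : ℝ → ℝ} {M N γ : ℝ}

lemma Cond51.nonneg (h : Cond51 f N γ) (hN : 0 < N) {t : ℝ} (ht : 0 < t) : 0 ≤ f t := by
  obtain ⟨δ₀, hδ₀, hδ⟩ := h t ht
  have hpos : 0 < N * δ₀ ^ γ := mul_pos hN (Real.rpow_pos_of_pos hδ₀ γ)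
  exact nonneg_of_mul_nonneg_right (hδ t ht le_rfl δ₀ hδ₀ le_rfl).2 hpos

lemma Cond51.exists_forall_mul_rpow_le (h : Cond51 f N γ) :
    ∃ s > 0, ∀ t ∈ Ioc 0 s, N * f 1 * t ^ γ ≤ f t := by
  obtain ⟨δ₀, hδ₀, hδ⟩ := h 1 one_pos
  refine ⟨δ₀, hδ₀, fun t ht => ?_⟩
  simpa [mul_right_comm] using (hδ 1 one_pos le_rfl t ht.1 ht.2).1

lemma Cond12.exists_forall_le_mul_rpow (h : Cond12 f M γ) (hγ : 0 ≤ γ)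
    (hf : ContinuousWithinAt f (Ioi 0) 0) :
    ∃ s > 0, ∀ t ∈ Icc 0 s, f t ≤ M * f 1 * t ^ γ := by
  obtain ⟨δ₀, hδ₀, hδ⟩ := h 1 one_pos
  have hpos : ∀ t ∈ Ioc 0 δ₀, f t ≤ M * f 1 * t ^ γ := fun t ht => by
    simpa [mul_right_comm] using (hδ 1 one_pos le_rfl t ht.1 ht.2).2
  refine ⟨δ₀, hδ₀, fun t ht => ?_⟩
  rcases ht.1.eq_or_lt with rfl | ht0
  · have hrpow : ContinuousWithinAt (fun t => M * f 1 * t ^ γ) (Ioi 0) 0 :=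
      ((Real.continuousAt_rpow_const 0 γ (.inr hγ)).const_mul _).continuousWithinAt
    exact le_of_tendsto_of_tendsto hf hrpow (eventually_of_mem (Ioc_mem_nhdsGT hδ₀) hpos)
  · exact hpos t ⟨ht0, ht.2⟩

end PowerGrowth

theorem free_boundary_null_general {n : ℕ} {Ω : Set (EuclideanSpace ℝ (Fin n))} (hΩ : IsOpen Ω)
    {f : ℝ → ℝ} {M N γ : ℝ} (hM : 0 < M) (hN : 0 < N) (hγ0 : 0 ≤ γ) (hγ3 : γ < 3)
    (hfc : ContinuousWithinAt f (Ioi 0) 0) (hf12 : Cond12 f M γ) (hf51 : Cond51 f N γ)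
    {u : EuclideanSpace ℝ (Fin n) → ℝ} (huc : ContinuousOn u Ω) (hu0 : ∀ x ∈ Ω, 0 ≤ u x)
    (hsol : IsViscSol Ω u fun _ t => f t) : volume (freeBoundary Ω u) = 0 := by
  obtain ⟨s₁, hs₁, hlower⟩ := hf51.exists_forall_mul_rpow_le
  obtain ⟨s₂, hs₂, hupper⟩ := hf12.exists_forall_le_mul_rpow hγ0 hfc
  rcases (hf51.nonneg hN one_pos).eq_or_lt with hf1 | hf1
  · have hnonpos : ∀ t ∈ Icc 0 s₂, f t ≤ 0 := by simpa [← hf1] using hupper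
    rw [hsol.1.freeBoundary_eq_empty hΩ huc hu0 hs₂ fun _ _ => hnonpos, measure_empty]
  · have hporous : ∀ x ∈ freeBoundary Ω u, IsPorousAt (freeBoundary Ω u) x := fun x hx =>
      hsol.isPorousAt_freeBoundary hΩ huc hu0 hγ0 hγ3 (mul_pos hN hf1) (mul_pos hM hf1).le
        (lt_min hs₁ hs₂) (fun _ _ t ht => hlower t ⟨ht.1, ht.2.trans (min_le_left _ _)⟩)
        (fun _ _ t ht => hupper t ⟨ht.1, ht.2.trans (min_le_right _ _)⟩) hx
    exact measure_eq_zero_of_forall_isPorousAt hporous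

/-- The free boundary has Lebesgue measure zero (Corollary 4.2). -/
theorem free_boundary_null {n : ℕ} (Ω : Set (EuclideanSpace ℝ (Fin n))) (hΩo : IsOpen Ω)
    (f : ℝ → ℝ) (M N γ : ℝ) (hM : 0 < M) (hN : 0 < N) (hγ0 : 0 ≤ γ) (hγ3 : γ < 3)
    (hfc : ContinuousOn f (Ici 0)) (hfmono : MonotoneOn f (Ici 0))
    (hf12 : Cond12 f M γ) (hf51 : Cond51 f N γ)
    (u : EuclideanSpace ℝ (Fin n) → ℝ)
    (huc : ContinuousOn u Ω) (hu0 : ∀ x ∈ Ω, 0 ≤ u x)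
    (hub : ∃ B, ∀ x ∈ Ω, u x ≤ B)
    (hsol : IsViscSol Ω u (fun _ t => f t)) :
    volume (frontier {x | x ∈ Ω ∧ 0 < u x} ∩ Ω) = 0 := by
  exact free_boundary_null_general hΩo hM hN hγ0 hγ3
    ((hfc 0 self_mem_Ici).mono Ioi_subset_Ici_self) hf12 hf51 huc hu0 hsol
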